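/- The set 𝒟^ℓ = {δℓ(n) : n a positive integer} of all addition chain defect values is a well-ordered subset of the real numbers (under the usual ordering, i.e., it contains no infinite strictly decreasing sequence), and its order type is exactly ω^ω. -/

import Mathlib

/-- `c` is an addition chain: a nonempty list of positive integers starting at `1`
such that every later entry is the sum of two (not necessarily distinct) earlier entries. -/
def IsAdditionChain (c : List ℕ) : Prop :=
  c.getD 0 0 = 1 ∧
    ∀ k, 0 < k → k < c.length →
      ∃ i j, i < k ∧ j < k ∧ c.getD k 0 = c.getD i 0 + c.getD j 0

/-- `c` is an addition chain whose last entry is `n`; its length is `c.length - 1`. -/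
def IsAdditionChainFor (c : List ℕ) (n : ℕ) : Prop :=
  IsAdditionChain c ∧ c.getD (c.length - 1) 0 = n

/-- ν₂(n): the number of 1's in the binary expansion of `n`. -/
def binaryWeight (n : ℕ) : ℕ := (Nat.digits 2 n).sum

/-- `ℓ^A(n)`: the least length (number of steps, i.e. one less than the number of
entries) of an addition chain for `n` belonging to the set `A` of addition chains. -/
noncomputable def chainLength (A : Set (List ℕ)) (n : ℕ) : ℕ :=
  sInf {r | ∃ c ∈ A, IsAdditionChainFor c n ∧ c.length = r + 1}

/-- A set `A` of addition chains is admissible if (i) every positive `n` has a chain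
in `A` of length at most `⌊log₂ n⌋ + ν₂(n) - 1` (i.e. with at most
`⌊log₂ n⌋ + ν₂(n)` entries) and (ii) `ℓ^A(2n) ≤ ℓ^A(n) + 1` for all positive `n`. -/
def Admissible (A : Set (List ℕ)) : Prop :=
  (∀ n : ℕ, 0 < n → ∃ c ∈ A, IsAdditionChainFor c n ∧
      c.length ≤ Nat.log 2 n + binaryWeight n) ∧
  ∀ n : ℕ, 0 < n → chainLength A (2 * n) ≤ chainLength A n + 1

/-- The A-defect `δ^A(n) = ℓ^A(n) - log₂ n`. -/
noncomputable def Adefect (A : Set (List ℕ)) (n : ℕ) : ℝ :=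
  (chainLength A n : ℝ) - Real.logb 2 n

/-- `m` is A-stable if `ℓ^A(2^k m) = ℓ^A(m) + k` for all `k ≥ 0`. -/
def AStable (A : Set (List ℕ)) (m : ℕ) : Prop :=
  ∀ k : ℕ, chainLength A (2 ^ k * m) = chainLength A m + k

/-- `𝒟^A`: the set of all A-defect values. -/
def defectSet (A : Set (List ℕ)) : Set ℝ :=
  {d | ∃ n : ℕ, 0 < n ∧ d = Adefect A n}

/-- `𝒟^A_st`: the set of all A-stable defects. -/
def stableDefectSet (A : Set (List ℕ)) : Set ℝ :=
  {d | ∃ n : ℕ, 0 < n ∧ AStable A n ∧ d = Adefect A n}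

open scoped Classical in
/-- The order type of a well-ordered subset `S` of a linear order
(junk value `0` if `S` is not well-ordered, i.e. not `Set.IsWF`). -/
noncomputable def setOrderType {X : Type*} [LinearOrder X] (S : Set X) : Ordinal :=
  if h : S.IsWF then
    letI : WellFoundedLT S := ⟨h⟩
    Ordinal.type ((· < ·) : S → S → Prop)
  else 0

/-- `ℓ(n)`: the addition chain length of `n` (minimum over all addition chains). -/
noncomputable def addChainLength (n : ℕ) : ℕ :=
  sInf {r | ∃ c, IsAdditionChainFor c n ∧ c.length = r + 1}

/-- The addition chain defect `δℓ(n) = ℓ(n) - log₂ n`. -/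
noncomputable def addDefect (n : ℕ) : ℝ :=
  (addChainLength n : ℝ) - Real.logb 2 n

/-! ### Binary weight -/

lemma bw_rec (n : ℕ) : binaryWeight n = n % 2 + binaryWeight (n / 2) := by
  unfold binaryWeight
  rcases Nat.eq_zero_or_pos n with rfl | h
  · simp
  · rw [Nat.digits_def' (by norm_num) h]; simp

lemma bw_zero : binaryWeight 0 = 0 := by simp [binaryWeight]

lemma bw_two_mul (n : ℕ) : binaryWeight (2 * n) = binaryWeight n := by
  rw [bw_rec]; simp

lemma bw_add_aux (a : ℕ) : ∀ b c : ℕ, c ≤ 1 →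
    binaryWeight (a + b + c) ≤ binaryWeight a + binaryWeight b + c := by
  suffices H : ∀ s a b c : ℕ, a + b + c ≤ s → c ≤ 1 →
      binaryWeight (a + b + c) ≤ binaryWeight a + binaryWeight b + c from
    fun b c hc => H _ a b c le_rfl hc
  intro s
  induction s using Nat.strong_induction_on with
  | _ s ih =>
    intro a b c hs hc
    by_cases h0 : a + b = 0
    · obtain ⟨rfl, rfl⟩ : a = 0 ∧ b = 0 := by omega
      interval_cases c <;> simp [binaryWeight]
    · rw [bw_rec (a + b + c), bw_rec a, bw_rec b]
      have e : (a + b + c) / 2 = a / 2 + b / 2 + (a % 2 + b % 2 + c) / 2 := by omega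
      rw [e]
      have h2 : (a % 2 + b % 2 + c) / 2 ≤ 1 := by omega
      by_cases hlt : a / 2 + b / 2 + (a % 2 + b % 2 + c) / 2 < s
      · have := ih _ hlt (a / 2) (b / 2) _ le_rfl h2
        omega
      · obtain ⟨h3, h4⟩ : a / 2 = 0 ∧ b / 2 = 0 := by omega
        rw [h3, h4, bw_zero]
        have : (a % 2 + b % 2 + c) / 2 = 0 ∨ (a % 2 + b % 2 + c) / 2 = 1 := by omega
        rcases this with h | h <;> rw [h] <;> simp [binaryWeight] <;> omega

lemma bw_add (a b : ℕ) : binaryWeight (a + b) ≤ binaryWeight a + binaryWeight b := by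
  simpa using bw_add_aux a b 0 (by norm_num)

lemma bw_lead (f : ℕ) : ∀ r, r < 2 ^ f → binaryWeight (2 ^ f + r) = 1 + binaryWeight r := by
  induction f with
  | zero => intro r hr; obtain rfl : r = 0 := by simpa using hr
            simp [binaryWeight]
  | succ f ih =>
    intro r hr
    rw [bw_rec, bw_rec r]
    have e : (2 ^ (f + 1) + r) / 2 = 2 ^ f + r / 2 := by rw [pow_succ]; omega
    have e2 : (2 ^ (f + 1) + r) % 2 = r % 2 := by rw [pow_succ]; omega
    rw [e, e2, ih _ (by rw [pow_succ] at hr; omega)]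
    omega

/-! ### Chains -/

lemma chain_bound_aux (a : ℕ → ℕ) (r : ℕ) (h0 : a 0 = 1)
    (h : ∀ k, 0 < k → k ≤ r → ∃ i j, i < k ∧ j < k ∧ a k = a i + a j) :
    ∀ k, k + 1 ≤ r → ∃ q' M' q M : ℕ,
      (∀ i ≤ k, a i ≤ M' ∧ binaryWeight (a i) ≤ 2 ^ q') ∧
      (∀ i ≤ k + 1, a i ≤ M ∧ binaryWeight (a i) ≤ 2 ^ q) ∧
      M' ≤ M ∧ M ≤ 2 * M' ∧ q' ≤ q ∧ q ≤ q' + 1 ∧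
      M' ^ 2 * 4 ^ q' ≤ 4 ^ k * 3 ^ q' ∧ M ^ 2 * 4 ^ q ≤ 4 ^ (k + 1) * 3 ^ q := by
  intro k
  induction k with
  | zero =>
    intro hr
    obtain ⟨i, j, hi, hj, hij⟩ := h 1 one_pos hr
    obtain rfl : i = 0 := by omega
    obtain rfl : j = 0 := by omega
    rw [h0] at hij
    refine ⟨0, 1, 0, 2, ?_, ?_, by norm_num, by norm_num, le_rfl, by norm_num, by norm_num,
      by norm_num⟩
    · intro i hi
      obtain rfl : i = 0 := by omega
      rw [h0]; simp [binaryWeight]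
    · intro i hi
      obtain rfl | rfl : i = 0 ∨ i = 1 := by omega
      · rw [h0]; simp [binaryWeight]
      · rw [hij]; simp [binaryWeight]
  | succ k ih =>
    intro hr
    obtain ⟨q', M', q, M, h1, h2, hM1, hM2, hq1, hq2, hb1, hb2⟩ := ih (by omega)
    obtain ⟨i, j, hi, hj, hij⟩ := h (k + 1 + 1) (by omega) hr
    by_cases hd : i = k + 1 ∧ j = k + 1
    · obtain ⟨rfl, rfl⟩ := hd
      refine ⟨q, M, q, 2 * M, h2, ?_, by omega, le_rfl, le_rfl, by omega, hb2, ?_⟩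
      · intro i hi'
        rcases Nat.lt_or_ge i (k + 1 + 1) with hlt | hge
        · have := h2 i (by omega)
          exact ⟨by omega, this.2⟩
        · obtain rfl : i = k + 1 + 1 := by omega
          have := h2 (k + 1) le_rfl
          rw [hij, ← two_mul, bw_two_mul]
          exact ⟨by omega, this.2⟩
      · calc (2 * M) ^ 2 * 4 ^ q = 4 * (M ^ 2 * 4 ^ q) := by ring
          _ ≤ 4 * (4 ^ (k + 1) * 3 ^ q) := by gcongr
          _ = _ := by ring
    · have hsum : a i + a j ≤ M + M' := by
        have hi1 := (h2 i (by omega)).1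
        have hj1 := (h2 j (by omega)).1
        by_cases hik : i ≤ k
        · have := (h1 i hik).1; omega
        · have := (h1 j (by omega)).1; omega
      refine ⟨q, M, q + 1, M + M', h2, ?_, by omega, by omega, by omega, by omega, hb2, ?_⟩
      · intro l hl
        rcases Nat.lt_or_ge l (k + 1 + 1) with hlt | hge
        · have := h2 l (by omega)
          exact ⟨by omega, this.2.trans (Nat.pow_le_pow_right (by norm_num) (by omega))⟩
        · obtain rfl : l = k + 1 + 1 := by omega
          rw [hij]
          refine ⟨hsum, (bw_add _ _).trans ?_⟩
          have := (h2 i (by omega)).2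
          have := (h2 j (by omega)).2
          rw [pow_succ]; omega
      · have h3 : M + M' ≤ 3 * M' := by omega
        rcases (show q = q' ∨ q = q' + 1 by omega) with rfl | rfl
        · calc (M + M') ^ 2 * 4 ^ (q + 1) ≤ (3 * M') ^ 2 * 4 ^ (q + 1) := by gcongr
            _ = 36 * (M' ^ 2 * 4 ^ q) := by ring
            _ ≤ 36 * (4 ^ k * 3 ^ q) := by gcongr
            _ ≤ 48 * (4 ^ k * 3 ^ q) := by gcongr; norm_num
            _ = _ := by ring
        · calc (M + M') ^ 2 * 4 ^ (q' + 1 + 1) ≤ (3 * M') ^ 2 * 4 ^ (q' + 1 + 1) := by gcongr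
            _ = 144 * (M' ^ 2 * 4 ^ q') := by ring
            _ ≤ 144 * (4 ^ k * 3 ^ q') := by gcongr
            _ = _ := by ring

/-- `n` has an addition chain of length `r`. -/
def HasChain (n r : ℕ) : Prop := ∃ c, IsAdditionChainFor c n ∧ c.length = r + 1

lemma HasChain.bound {n r : ℕ} (h : HasChain n r) :
    ∃ q, binaryWeight n ≤ 2 ^ q ∧ n ^ 2 * 4 ^ q ≤ 4 ^ r * 3 ^ q := by
  obtain ⟨c, ⟨⟨h0, h1⟩, h2⟩, hl⟩ := h
  rw [hl] at h2
  simp only [Nat.add_sub_cancel] at h2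
  rcases r with _ | r
  · rw [h0] at h2
    subst h2
    exact ⟨0, by simp [binaryWeight], by simp⟩
  · obtain ⟨q', M', q, M, -, hh, -, -, -, -, -, hb⟩ :=
      chain_bound_aux (fun i => c.getD i 0) (r + 1) h0
        (fun k hk hk' => h1 k hk (by omega)) r le_rfl
    have := hh (r + 1) le_rfl
    simp only [h2] at this
    refine ⟨q, this.2, le_trans ?_ hb⟩
    gcongr
    exact this.1

lemma hasChain_one : HasChain 1 0 := by
  refine ⟨[1], ⟨⟨rfl, ?_⟩, rfl⟩, rfl⟩
  intro k hk hk'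
  simp at hk'
  omega

lemma HasChain.extend {n r : ℕ} (c : List ℕ) (hc : IsAdditionChainFor c n) (hl : c.length = r + 1)
    (i j : ℕ) (hi : i < r + 1) (hj : j < r + 1) : HasChain (c.getD i 0 + c.getD j 0) (r + 1) := by
  obtain ⟨⟨h0, h1⟩, h2⟩ := hc
  refine ⟨c ++ [c.getD i 0 + c.getD j 0], ⟨⟨?_, ?_⟩, ?_⟩, by simp [hl]⟩
  · rw [List.getD_append _ _ _ _ (by omega)]; exact h0
  · intro k hk hk'
    simp only [List.length_append, List.length_singleton] at hk'
    rcases Nat.lt_or_ge k c.length with hlt | hge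
    · obtain ⟨i, j, hi, hj, hij⟩ := h1 k hk hlt
      refine ⟨i, j, hi, hj, ?_⟩
      rw [List.getD_append _ _ _ _ (by omega), List.getD_append _ _ _ _ (by omega),
        List.getD_append _ _ _ _ (by omega)]
      exact hij
    · obtain rfl : k = c.length := by omega
      refine ⟨i, j, by omega, by omega, ?_⟩
      rw [List.getD_append_right _ _ _ _ le_rfl, List.getD_append _ _ _ _ (by omega),
        List.getD_append _ _ _ _ (by omega)]
      simp
  · simp only [List.length_append, List.length_singleton, Nat.add_sub_cancel]
    rw [List.getD_append_right _ _ _ _ le_rfl]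
    simp

lemma HasChain.double {n r : ℕ} (h : HasChain n r) : HasChain (2 * n) (r + 1) := by
  obtain ⟨c, hc, hl⟩ := h
  have := HasChain.extend c hc hl r r (by omega) (by omega)
  have h2 := hc.2
  rw [hl, Nat.add_sub_cancel] at h2
  rwa [h2, ← two_mul] at this

lemma HasChain.succ {n r : ℕ} (h : HasChain n r) : HasChain (n + 1) (r + 1) := by
  obtain ⟨c, hc, hl⟩ := h
  have := HasChain.extend c hc hl r 0 (by omega) (by omega)
  have h2 := hc.2
  rw [hl, Nat.add_sub_cancel] at h2
  rwa [h2, hc.1.1] at this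

lemma HasChain.pow {n r : ℕ} (h : HasChain n r) (b : ℕ) : HasChain (n * 2 ^ b) (r + b) := by
  induction b with
  | zero => simpa using h
  | succ b ih =>
    have := ih.double
    rwa [show 2 * (n * 2 ^ b) = n * 2 ^ (b + 1) by ring] at this

lemma HasChain.le {n r : ℕ} (h : HasChain n r) : addChainLength n ≤ r := Nat.sInf_le h

lemma hasChain_exists {n : ℕ} (h : 0 < n) : ∃ r, HasChain n r := by
  induction n, h using Nat.le_induction with
  | base => exact ⟨0, hasChain_one⟩
  | succ n _ ih => obtain ⟨r, hr⟩ := ih; exact ⟨r + 1, hr.succ⟩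

lemma hasChain_min {n : ℕ} (h : 0 < n) : HasChain n (addChainLength n) := by
  have := Nat.sInf_mem (s := {r | HasChain n r}) (hasChain_exists h)
  exact this

lemma pow_le_of_bound {n r q e : ℕ} (h : n ^ 2 * 4 ^ q ≤ 4 ^ r * 3 ^ q) (he : 2 ^ e ≤ n) :
    e ≤ r ∧ q ≤ 5 * (r - e) := by
  have h1 : 4 ^ e * 4 ^ q ≤ 4 ^ r * 3 ^ q := by
    refine le_trans ?_ h
    have : (4 : ℕ) ^ e = (2 ^ e) ^ 2 := by rw [← pow_mul, mul_comm, pow_mul]; norm_num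
    rw [this]; gcongr
  have her : e ≤ r := by
    by_contra hlt
    push Not at hlt
    have a1 : (4 : ℕ) ^ r < 4 ^ e := Nat.pow_lt_pow_right (by norm_num) hlt
    have a2 : (3 : ℕ) ^ q ≤ 4 ^ q := Nat.pow_le_pow_left (by norm_num) q
    have : (4 : ℕ) ^ r * 3 ^ q < 4 ^ e * 4 ^ q := Nat.mul_lt_mul_of_lt_of_le a1 a2 (by positivity)
    omega
  refine ⟨her, ?_⟩
  obtain ⟨c, rfl⟩ := Nat.exists_eq_add_of_le her
  rw [Nat.add_sub_cancel_left]
  rw [pow_add, mul_assoc] at h1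
  have h2 := Nat.le_of_mul_le_mul_left h1 (by positivity)
  by_contra hlt
  push Not at hlt
  obtain ⟨d, rfl⟩ := Nat.exists_eq_add_of_lt hlt
  have b1 : (4 : ℕ) ^ c * 3 ^ (5 * c) ≤ 4 ^ (5 * c) := by
    rw [pow_mul, pow_mul, ← mul_pow]
    exact Nat.pow_le_pow_left (by norm_num) c
  have b2 : (3 : ℕ) ^ (d + 1) < 4 ^ (d + 1) := Nat.pow_lt_pow_left (by norm_num) (by omega)
  have : (4 : ℕ) ^ c * 3 ^ (5 * c + d + 1) < 4 ^ (5 * c + d + 1) := by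
    calc (4 : ℕ) ^ c * 3 ^ (5 * c + d + 1) = (4 ^ c * 3 ^ (5 * c)) * 3 ^ (d + 1) := by ring
      _ ≤ 4 ^ (5 * c) * 3 ^ (d + 1) := by gcongr
      _ < 4 ^ (5 * c) * 4 ^ (d + 1) := by gcongr
      _ = _ := by ring
  omega

lemma log_le_length {n e : ℕ} (he : 2 ^ e ≤ n) : e ≤ addChainLength n := by
  obtain ⟨q, -, h⟩ := (hasChain_min (n := n) (lt_of_lt_of_le (by positivity) he)).bound
  exact (pow_le_of_bound h he).1

lemma weight_le {n e : ℕ} (he : 2 ^ e ≤ n) :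
    binaryWeight n ≤ 32 ^ (addChainLength n - e) := by
  obtain ⟨q, hq, h⟩ := (hasChain_min (n := n) (lt_of_lt_of_le (by positivity) he)).bound
  have := (pow_le_of_bound h he).2
  calc _ ≤ 2 ^ q := hq
    _ ≤ 2 ^ (5 * (addChainLength n - e)) := Nat.pow_le_pow_right (by norm_num) this
    _ = _ := by rw [pow_mul]; norm_num

lemma defect_eq {n e : ℕ} (he : 2 ^ e ≤ n) :
    addDefect n = ((addChainLength n - e : ℕ) : ℝ) - Real.logb 2 ((n : ℝ) / 2 ^ e) := by
  have hn : (n : ℝ) ≠ 0 := by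
    have : 0 < n := lt_of_lt_of_le (by positivity) he
    positivity
  rw [Real.logb_div hn (by positivity), Nat.cast_sub (log_le_length he), addDefect,
    Real.logb_pow, Real.logb_self_eq_one (by norm_num)]
  ring

/-! ### Upper bound -/

/-- Dyadic fractions in `[0,1)` with at most `K` ones. -/
def fracSet (K : ℕ) : Set ℝ :=
  {x | ∃ r e : ℕ, r < 2 ^ e ∧ binaryWeight r ≤ K ∧ x = (r : ℝ) / 2 ^ e}

lemma fracSet_mem {K : ℕ} {x : ℝ} (h : x ∈ fracSet K) : 0 ≤ x ∧ x < 1 := by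
  obtain ⟨r, e, h1, -, rfl⟩ := h
  refine ⟨by positivity, ?_⟩
  rw [div_lt_one (by positivity)]
  exact_mod_cast h1

lemma fracSet_succ {K : ℕ} {x : ℝ} (h : x ∈ fracSet (K + 1)) (hx : x ≠ 0) :
    ∃ b : ℕ, ∃ t ∈ fracSet K, x = (1 + t) / 2 ^ b := by
  obtain ⟨r, e, h1, h2, rfl⟩ := h
  have hr : r ≠ 0 := by rintro rfl; simp at hx
  set f := Nat.log 2 r
  have hf1 : 2 ^ f ≤ r := Nat.pow_log_le_self 2 hr
  have hf2 : r < 2 ^ (f + 1) := Nat.lt_pow_succ_log_self (by norm_num) r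
  have hfe : f < e := by
    by_contra hle
    push Not at hle
    have := Nat.pow_le_pow_right (n := 2) (by norm_num) hle
    omega
  obtain ⟨s, hs⟩ := Nat.exists_eq_add_of_le hf1
  obtain ⟨b, rfl⟩ := Nat.exists_eq_add_of_lt hfe
  have hs2 : s < 2 ^ f := by rw [pow_succ] at hf2; omega
  refine ⟨b + 1, s / 2 ^ f, ⟨s, f, hs2, ?_, rfl⟩, ?_⟩
  · have := bw_lead f s hs2
    rw [← hs] at this
    omega
  · have : (r : ℝ) = 2 ^ f + s := by rw [hs]; push_cast; rfl
    rw [this, add_assoc f b 1, pow_add (2 : ℝ) f (b + 1)]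
    field_simp

open Ordinal in
lemma block_lt {K : ℕ} {a b : ℕ} {x y : Ordinal.{0}} (hx : x ≤ ω ^ K) (hab : a < b) :
    ω ^ K * ((2 * a : ℕ) : Ordinal) + x < ω ^ K * ((2 * b : ℕ) : Ordinal) + y := by
  have hpos : (0 : Ordinal.{0}) < ω ^ K := pow_pos omega0_pos K
  calc ω ^ K * ((2 * a : ℕ) : Ordinal) + x ≤ ω ^ K * ((2 * a : ℕ) : Ordinal) + ω ^ K := by gcongr
    _ = ω ^ K * ((2 * a + 1 : ℕ) : Ordinal) := by push_cast; rw [mul_add, mul_one]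
    _ < ω ^ K * ((2 * b : ℕ) : Ordinal) := by
      apply mul_lt_mul_of_pos_left _ hpos
      exact_mod_cast (by omega : 2 * a + 1 < 2 * b)
    _ ≤ _ := le_self_add

open Ordinal in
lemma block_lt_pow {K a : ℕ} {x : Ordinal.{0}} (hx : x ≤ ω ^ K) :
    ω ^ K * ((2 * a : ℕ) : Ordinal) + x < ω ^ (K + 1) := by
  have h := block_lt (y := 0) hx (Nat.lt_succ_self a)
  refine h.trans ?_
  rw [add_zero, pow_succ]
  exact mul_lt_mul_of_pos_left (natCast_lt_omega0 _) (pow_pos omega0_pos K)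

open Ordinal in
lemma exists_rank (K : ℕ) : ∃ g : ℝ → Ordinal.{0},
    (∀ x ∈ fracSet K, g x ≤ ω ^ K) ∧ StrictAntiOn g (fracSet K) := by
  classical
  induction K with
  | zero =>
    have h0 : ∀ x ∈ fracSet 0, x = 0 := by
      rintro x ⟨r, e, h1, h2, rfl⟩
      have : r = 0 := by
        by_contra hr
        have hf1 : 2 ^ Nat.log 2 r ≤ r := Nat.pow_log_le_self 2 hr
        have hf2 : r < 2 ^ (Nat.log 2 r + 1) := Nat.lt_pow_succ_log_self (by norm_num) r
        obtain ⟨s, hs⟩ := Nat.exists_eq_add_of_le hf1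
        have := bw_lead (Nat.log 2 r) s (by rw [pow_succ] at hf2; omega)
        rw [← hs] at this
        omega
      simp [this]
    refine ⟨fun _ => 0, fun _ _ => zero_le, ?_⟩
    intro x hx y hy hxy
    rw [h0 x hx, h0 y hy] at hxy
    exact absurd hxy (lt_irrefl _)
  | succ K ih =>
    obtain ⟨g, hg1, hg2⟩ := ih
    have H : ∀ x : ℝ, ∃ b : ℕ, ∃ t : ℝ, x ∈ fracSet (K + 1) → x ≠ 0 →
        t ∈ fracSet K ∧ x = (1 + t) / 2 ^ b := by
      intro x
      by_cases hx : x ∈ fracSet (K + 1) ∧ x ≠ 0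
      · obtain ⟨b, t, ht, h⟩ := fracSet_succ hx.1 hx.2
        exact ⟨b, t, fun _ _ => ⟨ht, h⟩⟩
      · exact ⟨0, 0, fun h h' => absurd ⟨h, h'⟩ hx⟩
    choose b t hbt using H
    refine ⟨fun x => if x = 0 then ω ^ (K + 1) else ω ^ K * ((2 * b x : ℕ) : Ordinal) + g (t x),
      ?_, ?_⟩
    · intro x hx
      by_cases h : x = 0
      · simp [h]
      · simp only [h, if_false]
        exact (block_lt_pow (hg1 _ (hbt x hx h).1)).le
    · intro x hx y hy hxy
      have hy0 : y ≠ 0 := ((fracSet_mem hx).1.trans_lt hxy).ne'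
      obtain ⟨hty, hyy⟩ := hbt y hy hy0
      simp only [hy0, if_false]
      by_cases h : x = 0
      · simp only [h, if_true]
        exact block_lt_pow (hg1 _ hty)
      · simp only [h, if_false]
        obtain ⟨htx, hxx⟩ := hbt x hx h
        have t1 := fracSet_mem htx
        have t2 := fracSet_mem hty
        rcases lt_trichotomy (b y) (b x) with hb | hb | hb
        · exact block_lt (hg1 _ hty) hb
        · rw [hb]
          gcongr
          apply hg2 htx hty
          rw [hxx, hyy, hb] at hxy
          have := (div_lt_div_iff_of_pos_right (by positivity)).1 hxy
          linarith
        · exfalso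
          have e1 : (1 : ℝ) / 2 ^ b x ≤ x := by
            conv_rhs => rw [hxx]
            gcongr
            linarith
          have e2 : y < 2 / 2 ^ b y := by
            conv_lhs => rw [hyy]
            gcongr
            linarith
          have e3 : (2 : ℝ) / 2 ^ b y ≤ 1 / 2 ^ b x := by
            obtain ⟨d, hd⟩ := Nat.exists_eq_add_of_lt hb
            rw [hd, div_le_div_iff₀ (by positivity) (by positivity), add_assoc, pow_add, pow_succ]
            have : (1 : ℝ) ≤ 2 ^ d := one_le_pow₀ (by norm_num)
            have : (0 : ℝ) < 2 ^ b x := by positivity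
            nlinarith
          linarith

open Ordinal in
lemma exists_rank_nat : ∃ F : ℕ → Ordinal.{0}, (∀ n, 0 < n → F n < ω ^ ω) ∧
    ∀ m n, 0 < m → 0 < n → addDefect m < addDefect n → F m < F n := by
  choose g hg1 hg2 using exists_rank
  let c : ℕ → ℕ := fun n => addChainLength n - Nat.log 2 n
  let x : ℕ → ℝ := fun n => (n : ℝ) / 2 ^ Nat.log 2 n
  have hx1 : ∀ n, 0 < n → 1 ≤ x n ∧ x n < 2 := by
    intro n hn
    have h1 : 2 ^ Nat.log 2 n ≤ n := Nat.pow_log_le_self 2 hn.ne'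
    have h2 : n < 2 ^ (Nat.log 2 n + 1) := Nat.lt_pow_succ_log_self (by norm_num) n
    constructor
    · simp only [x]; rw [le_div_iff₀ (by positivity), one_mul]; exact_mod_cast h1
    · simp only [x]; rw [div_lt_iff₀ (by positivity)]; rw [pow_succ'] at h2; exact_mod_cast h2
  have hmem : ∀ n, 0 < n → x n - 1 ∈ fracSet (32 ^ c n) := by
    intro n hn
    have h1 : 2 ^ Nat.log 2 n ≤ n := Nat.pow_log_le_self 2 hn.ne'
    have h2 : n < 2 ^ (Nat.log 2 n + 1) := Nat.lt_pow_succ_log_self (by norm_num) n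
    have h3 := weight_le h1
    obtain ⟨s, hs⟩ := Nat.exists_eq_add_of_le h1
    have hs2 : s < 2 ^ Nat.log 2 n := by rw [pow_succ] at h2; omega
    have := bw_lead (Nat.log 2 n) s hs2
    rw [← hs] at this
    refine ⟨s, Nat.log 2 n, hs2, by simp only [c]; omega, ?_⟩
    have : (n : ℝ) = 2 ^ Nat.log 2 n + s := by exact_mod_cast hs
    simp only [x]
    field_simp
    linarith
  have hdef : ∀ n, 0 < n → addDefect n = c n - Real.logb 2 (x n) := by
    intro n hn
    exact defect_eq (Nat.pow_log_le_self 2 hn.ne')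
  have hlog : ∀ n, 0 < n → 0 ≤ Real.logb 2 (x n) ∧ Real.logb 2 (x n) < 1 := by
    intro n hn
    obtain ⟨h1, h2⟩ := hx1 n hn
    refine ⟨Real.logb_nonneg (by norm_num) h1, ?_⟩
    rw [Real.logb_lt_iff_lt_rpow (by norm_num) (by linarith)]
    simpa using h2
  have hbig : ∀ n, 0 < n → ∀ C, c n < C →
      ω ^ (32 ^ c n) + g (32 ^ c n) (x n - 1) < ω ^ (32 ^ C) := by
    intro n hn C hC
    have h1 := hg1 _ _ (hmem n hn)
    calc ω ^ (32 ^ c n) + g (32 ^ c n) (x n - 1)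
        ≤ ω ^ (32 ^ c n) * ((2 * 1 : ℕ) : Ordinal) + g (32 ^ c n) (x n - 1) := by
          gcongr
          push_cast
          exact le_mul_of_one_le_right zero_le (by norm_num)
      _ < ω ^ (32 ^ c n + 1) := block_lt_pow h1
      _ ≤ ω ^ (32 ^ C) := by
        apply pow_le_pow_right₀ one_lt_omega0.le
        exact Nat.pow_lt_pow_right (by norm_num) hC
  refine ⟨fun n => ω ^ (32 ^ c n) + g (32 ^ c n) (x n - 1), ?_, ?_⟩
  · intro n hn
    refine (hbig n hn _ (Nat.lt_succ_self _)).trans ?_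
    rw [← opow_natCast, opow_lt_opow_iff_right one_lt_omega0]
    exact natCast_lt_omega0 _
  · intro m n hm hn hlt
    rw [hdef m hm, hdef n hn] at hlt
    have l1 := hlog m hm
    have l2 := hlog n hn
    have hc : c m ≤ c n := by
      have : (c m : ℝ) < (c n + 1 : ℕ) := by push_cast; linarith
      have := Nat.cast_lt.1 this
      omega
    rcases hc.lt_or_eq with hc | hc
    · exact (hbig m hm _ hc).trans_le le_self_add
    · have hmm := hmem m hm
      simp only [hc] at hlt hmm ⊢
      gcongr
      apply hg2 _ (hmem n hn) hmm
      have : Real.logb 2 (x n) < Real.logb 2 (x m) := by linarith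
      have := (Real.logb_lt_logb_iff (by norm_num) (by linarith [hx1 n hn]) (by linarith [hx1 m hm])).1 this
      linarith

/-! ### Lower bound -/

open Ordinal Set in
lemma exists_mono (N k : ℕ) : ∀ (col : ℝ → Fin N) (m e j : ℕ), 2 ^ e ≤ m → m < 2 ^ (e + 1) →
    HasChain m (e + j) → ∃ (c0 : Fin N) (h : Ordinal.{0} → ℝ),
      (∀ α < ω ^ k, (m : ℝ) / 2 ^ e ≤ h α ∧ h α < (m + 1 : ℝ) / 2 ^ e ∧ col (h α) = c0 ∧
        ∃ m' e' : ℕ, 2 ^ e' ≤ m' ∧ HasChain m' (e' + (j + k)) ∧ h α = (m' : ℝ) / 2 ^ e') ∧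
      StrictAntiOn h (Iio (ω ^ k)) := by
  classical
  induction k with
  | zero =>
    intro col m e j h1 h2 h3
    refine ⟨col (m / 2 ^ e), fun _ => m / 2 ^ e, ?_, ?_⟩
    · intro α _
      refine ⟨le_rfl, ?_, rfl, m, e, h1, h3, rfl⟩
      exact div_lt_div_of_pos_right (lt_add_one _) (by positivity)
    · intro a ha b hb hab
      rw [pow_zero, mem_Iio, Order.lt_one_iff] at ha hb
      rw [ha, hb] at hab
      exact absurd hab (lt_irrefl _)
  | succ k ih =>
    intro col m e j h1 h2 h3
    have hpos : (0 : Ordinal.{0}) < ω ^ k := pow_pos omega0_pos k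
    have step : ∀ b : ℕ, ∃ (c0 : Fin N) (h : Ordinal.{0} → ℝ),
      (∀ α < ω ^ k, ((m : ℝ) / 2 ^ e + 1 / 2 ^ (e + (b + 1))) ≤ h α ∧
        h α < (m : ℝ) / 2 ^ e + 2 / 2 ^ (e + (b + 1)) ∧ col (h α) = c0 ∧
        ∃ m' e' : ℕ, 2 ^ e' ≤ m' ∧ HasChain m' (e' + (j + (k + 1))) ∧ h α = (m' : ℝ) / 2 ^ e') ∧
      StrictAntiOn h (Iio (ω ^ k)) := by
      intro b
      have hp : 2 ≤ 2 ^ (b + 1) := by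
        rw [pow_succ]; have : 0 < 2 ^ b := by positivity
        omega
      have hc := (h3.pow (b + 1)).succ
      obtain ⟨c0, h, hh, ha⟩ := ih col (m * 2 ^ (b + 1) + 1) (e + (b + 1)) (j + 1)
        (by rw [pow_add]; have := Nat.mul_le_mul_right (2 ^ (b + 1)) h1; omega)
        (by
          rw [show e + (b + 1) + 1 = (e + 1) + (b + 1) by ring, pow_add 2 (e + 1)]
          have := Nat.mul_le_mul_right (2 ^ (b + 1)) (Nat.succ_le_of_lt h2)
          rw [Nat.succ_mul] at this
          omega)
        (by convert hc using 1; ring)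
      refine ⟨c0, h, fun α hα => ?_, ha⟩
      obtain ⟨a1, a2, a3, m', e', a4, a5, a6⟩ := hh α hα
      refine ⟨?_, ?_, a3, m', e', a4, ?_, a6⟩
      · refine le_of_eq_of_le ?_ a1
        push_cast
        rw [pow_add (2 : ℝ) e]
        field_simp
      · refine lt_of_lt_of_eq a2 ?_
        push_cast
        rw [pow_add (2 : ℝ) e]
        field_simp
        ring
      · convert a5 using 1; ring
    choose cc hh H1 H2 using step
    obtain ⟨c0, hc0⟩ := Finite.exists_infinite_fiber cc
    have hinf : (cc ⁻¹' {c0}).Infinite := Set.infinite_coe_iff.1 hc0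
    have : Infinite (cc ⁻¹' {c0}) := hc0
    let s : ℕ → ℕ := fun i => Nat.nth (· ∈ cc ⁻¹' {c0}) i
    have hs1 : StrictMono s := Nat.nth_strictMono hinf
    have hs2 : ∀ i, cc (s i) = c0 := fun i => Nat.nth_mem_of_infinite hinf i
    have hidx : ∀ α : Ordinal.{0}, ∃ i : ℕ, α < ω ^ (k + 1) → α / ω ^ k = i := by
      intro α
      by_cases h : α < ω ^ (k + 1)
      · rw [pow_succ] at h
        obtain ⟨i, hi⟩ := lt_omega0.1 ((lt_mul_iff_div_lt hpos.ne').1 h)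
        exact ⟨i, fun _ => hi⟩
      · exact ⟨0, fun h' => absurd h' h⟩
    choose idx hidx using hidx
    have hmod : ∀ α : Ordinal.{0}, α % ω ^ k < ω ^ k := fun α => mod_lt α hpos.ne'
    have hdm : ∀ α : Ordinal.{0}, α < ω ^ (k + 1) → ω ^ k * (idx α : Ordinal) + α % ω ^ k = α := by
      intro α hα
      rw [← hidx α hα]; exact div_add_mod _ _
    refine ⟨c0, fun α => hh (s (idx α)) (α % ω ^ k), ?_, ?_⟩
    · intro α hα
      obtain ⟨a1, a2, a3, a4⟩ := H1 (s (idx α)) _ (hmod α)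
      refine ⟨le_trans ?_ a1, a2.trans_le ?_, a3.trans (hs2 _), a4⟩
      · have : (0 : ℝ) ≤ 1 / 2 ^ (e + (s (idx α) + 1)) := by positivity
        linarith
      · rw [add_div]
        gcongr _ + ?_
        rw [div_le_div_iff₀ (by positivity) (by positivity), pow_add (2 : ℝ) e, pow_succ]
        have : (1 : ℝ) ≤ 2 ^ (s (idx α)) := one_le_pow₀ (by norm_num)
        have : (0 : ℝ) < 2 ^ e := by positivity
        nlinarith
    · intro a ha b hb hab
      simp only
      have hle : idx a ≤ idx b := by
        by_contra hlt
        push Not at hlt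
        have : b < a := by
          rw [← hdm a ha, ← hdm b hb]
          calc ω ^ k * (idx b : Ordinal) + b % ω ^ k < ω ^ k * (idx b : Ordinal) + ω ^ k := by
                gcongr; exact hmod b
            _ = ω ^ k * ((idx b + 1 : ℕ) : Ordinal) := by push_cast; rw [mul_add, mul_one]
            _ ≤ ω ^ k * (idx a : Ordinal) := by gcongr; exact_mod_cast hlt
            _ ≤ _ := le_self_add
        exact absurd hab this.not_gt
      rcases hle.lt_or_eq with hlt | heq
      · have h5 := hs1 hlt
        have a1 := (H1 (s (idx a)) _ (hmod a)).1
        have a2 := (H1 (s (idx b)) _ (hmod b)).2.1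
        refine a2.trans_le (le_trans ?_ a1)
        gcongr _ + ?_
        obtain ⟨d, hd⟩ := Nat.exists_eq_add_of_lt h5
        rw [hd, div_le_div_iff₀ (by positivity) (by positivity),
          show e + (s (idx a) + d + 1 + 1) = (e + (s (idx a) + 1)) + d + 1 by ring, pow_succ,
          pow_add _ _ d]
        have : (1 : ℝ) ≤ 2 ^ d := one_le_pow₀ (by norm_num)
        have : (0 : ℝ) < 2 ^ (e + (s (idx a) + 1)) := by positivity
        nlinarith
      · rw [heq]
        apply H2 _ (hmod a) (hmod b)
        have e1 := hdm a ha
        have e2 := hdm b hb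
        rw [← e1, ← e2, heq] at hab
        exact lt_of_add_lt_add_left hab

open Ordinal Set in
lemma exists_embed (k : ℕ) : ∃ h : Ordinal.{0} → ℝ,
    (∀ α < ω ^ k, ∃ n : ℕ, 0 < n ∧ h α = addDefect n) ∧ StrictMonoOn h (Iio (ω ^ k)) := by
  classical
  have H : ∀ z : ℝ, ∃ m e : ℕ, (∃ m' e' : ℕ, 2 ^ e' ≤ m' ∧ HasChain m' (e' + k) ∧
      z = (m' : ℝ) / 2 ^ e') → 2 ^ e ≤ m ∧ HasChain m (e + k) ∧ z = (m : ℝ) / 2 ^ e := by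
    intro z
    by_cases h : ∃ m' e' : ℕ, 2 ^ e' ≤ m' ∧ HasChain m' (e' + k) ∧ z = (m' : ℝ) / 2 ^ e'
    · obtain ⟨m, e, h⟩ := h
      exact ⟨m, e, fun _ => h⟩
    · exact ⟨0, 0, fun h' => absurd h' h⟩
  choose m e H using H
  let col : ℝ → Fin (k + 1) := fun z => Fin.ofNat (k + 1) (addChainLength (m z) - e z)
  obtain ⟨c0, h, h1, h2⟩ := exists_mono (k + 1) k col 1 0 0 (by norm_num) (by norm_num) hasChain_one
  refine ⟨fun α => (c0.val : ℝ) - Real.logb 2 (h α), ?_, ?_⟩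
  · intro α hα
    obtain ⟨a1, a2, a3, a4⟩ := h1 α hα
    rw [zero_add] at a4
    obtain ⟨b1, b2, b3⟩ := H _ a4
    refine ⟨m (h α), lt_of_lt_of_le (by positivity) b1, ?_⟩
    rw [defect_eq b1, ← b3, ← a3]
    have := b2.le
    simp only [col, Fin.val_ofNat]
    rw [Nat.mod_eq_of_lt (by omega)]
  · intro a ha b hb hab
    have p1 := (h1 b hb).1
    have := Real.logb_lt_logb (b := 2) (by norm_num) (by
      have : (0 : ℝ) < ((1 : ℕ) : ℝ) / 2 ^ 0 := by norm_num
      linarith) (h2 ha hb hab)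
    simp only
    linarith

/-- The set `𝒟^ℓ` of all addition chain defect values is a well-ordered subset of `ℝ`
of order type exactly `ω ^ ω`. -/
theorem addition_chain_defect_set_wellOrdered_orderType_omega_pow_omega :
    {d : ℝ | ∃ n : ℕ, 0 < n ∧ d = addDefect n}.IsWF ∧
    setOrderType {d : ℝ | ∃ n : ℕ, 0 < n ∧ d = addDefect n} =
      Ordinal.omega0 ^ Ordinal.omega0 := by
  classical
  set D := {d : ℝ | ∃ n : ℕ, 0 < n ∧ d = addDefect n} with hD
  obtain ⟨F, hF1, hF2⟩ := exists_rank_nat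
  choose nn hn1 hn2 using fun d : D => d.2
  have hmono : ∀ a b : D, a < b → F (nn a) < F (nn b) := by
    intro a b hab
    apply hF2 _ _ (hn1 a) (hn1 b)
    rw [← hn2, ← hn2]
    exact hab
  have hwf : D.IsWF := by
    have : WellFounded (fun a b : D => a < b) :=
      Subrelation.wf (r := InvImage (· < ·) (fun a : D => F (nn a))) (fun {a b} h => hmono a b h)
        (InvImage.wf _ wellFounded_lt)
    exact this
  refine ⟨hwf, ?_⟩
  rw [setOrderType, dif_pos hwf]
  letI : WellFoundedLT D := ⟨hwf⟩
  apply le_antisymm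
  · rw [← Ordinal.type_toType (Ordinal.omega0 ^ Ordinal.omega0), Ordinal.type_le_iff']
    exact ⟨(OrderEmbedding.ofStrictMono
      (fun a : D => Ordinal.ToType.mk ⟨F (nn a), hF1 _ (hn1 a)⟩)
      (fun a b hab => Ordinal.ToType.mk.lt_iff_lt.2 (hmono a b hab))).ltEmbedding⟩
  · rw [Ordinal.opow_le_of_isSuccLimit Ordinal.omega0_ne_zero Ordinal.isSuccLimit_omega0]
    intro b hb
    obtain ⟨k, rfl⟩ := Ordinal.lt_omega0.1 hb
    rw [Ordinal.opow_natCast]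
    obtain ⟨h, h1, h2⟩ := exists_embed k
    rw [← Ordinal.type_toType (Ordinal.omega0 ^ k), Ordinal.type_le_iff']
    exact ⟨(OrderEmbedding.ofStrictMono
      (fun a : (Ordinal.omega0 ^ k).ToType =>
        (⟨h (Ordinal.ToType.mk.symm a).1, h1 _ (Ordinal.ToType.mk.symm a).2⟩ : D))
      (fun a b hab => h2 (Ordinal.ToType.mk.symm a).2 (Ordinal.ToType.mk.symm b).2
        (Ordinal.ToType.mk.symm.lt_iff_lt.2 hab))).ltEmbedding⟩
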